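/- Let λ(t):=λ₁(Γ_t) for t>−1. (a) For every L ≥ 0, if μ ∈ ℝ and 0 ≠ q ∈ H¹(L,∞) satisfy the Sturm–Liouville eigen-equation −q'' + λ q = μ q on (L,∞) with Neumann condition q'(L)=0, then μ > λ(L). (b) For every L > −1, the ground energy satisfies μ(L) ≤ λ₁(Γ), where μ(L):=inf{∫_L^∞(|q'(t)|²+λ(t)|q(t)|²)dt / ∫_L^∞|q(t)|²dt : 0≠q∈H¹(L,∞)}. -/

import Mathlib

/-!
Write `λ(t) = λ₁(Γ_t)`. Both bounds follow once `λ` is known to be nondecreasing on `[0,∞)` and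
eventually at most `r`, for every Rayleigh quotient `r` of the full guide `Γ`.

For `0 ≤ L ≤ t`, cut an admissible function on `Γ_t` along `Γ_L`. Its restriction to `Γ_L` is
admissible there, and on the two remaining strips, of width one with Dirichlet conditions on the
long sides, the energy is at least `π²` times the mass. So `λ(L) ≤ λ(t)` as soon as `λ(L) ≤ π²`.
The latter holds because `sin (π (min x y + 1))` has Rayleigh quotient exactly `π²` on `Γ_L`; this
function is not `C¹`, but it is a limit of admissible ones. The strip inequality is one-dimensional:
if `T' + T² = -k²`, then integrating `(f' - T f)² ≥ 0` gives `k² ∫ f² ≤ ∫ f'²`, and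
`T = -k tan (k (x - midpoint))` is such a `T` for every `k` below `π / length`.

If `q'' = (λ - μ) q` with `μ ≤ λ(L)`, then `(q²)'' ≥ 0`. With `q'(L) = 0` the function `q²` is
nondecreasing, and an integrable nonnegative nondecreasing function on `(L,∞)` vanishes.

A trial function for `λ₁(Γ)` with quotient `r` is admissible on all large `Γ_t`, so `λ ≤ r` far
out. A bump of width `n` placed there has kinetic energy `O(n⁻²)` relative to its mass, so
`μ(L) ≤ r`.
-/

noncomputable section
open MeasureTheory Set Real

/-- The interval `I = (-1,0)`. -/
def II : Set ℝ := Set.Ioo (-1) 0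

/-- The broken guide `Γ = {x ∈ ℝ² : -1 < min(x₁,x₂) < 0}`. -/
def Gam : Set (ℝ × ℝ) := {p | -1 < min p.1 p.2 ∧ min p.1 p.2 < 0}

/-- The box `□_L = {x : max(|x₁+1|,|x₂+1|) < L}`. -/
def Box (L : ℝ) : Set (ℝ × ℝ) := {p | |p.1 + 1| < L ∧ |p.2 + 1| < L}

/-- The finite guide `Γ_R = Γ ∩ □_{R+1}`. -/
def GamR (R : ℝ) : Set (ℝ × ℝ) := Gam ∩ Box (R + 1)

/-- The Neumann part `Σ_R = ∂Γ_R ∩ ∂□_{R+1}` of the boundary. -/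
def Sig (R : ℝ) : Set (ℝ × ℝ) := frontier (GamR R) ∩ frontier (Box (R + 1))

/-- The Dirichlet part `∂Γ_R ∖ Σ_R` of the boundary. -/
def DirB (R : ℝ) : Set (ℝ × ℝ) := frontier (GamR R) \ Sig R

/-- Squared gradient `|∇u|² = (∂₁u)² + (∂₂u)²`. -/
def gradSq2 (u : ℝ × ℝ → ℝ) (p : ℝ × ℝ) : ℝ :=
  (fderiv ℝ u p (1, 0)) ^ 2 + (fderiv ℝ u p (0, 1)) ^ 2

/-- Admissible functions for the mixed problem on `Γ_R`: `C¹` up to the boundary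
(modelled by a globally `C¹` extension) vanishing on the Dirichlet part. -/
def AdmR (R : ℝ) (u : ℝ × ℝ → ℝ) : Prop :=
  ContDiff ℝ 1 u ∧ ∀ p ∈ DirB R, u p = 0

/-- First Rayleigh quotient `λ₁(Γ_R)` of the mixed Dirichlet–Neumann Laplacian on `Γ_R`. -/
def lamR (R : ℝ) : ℝ :=
  sInf {r | ∃ u : ℝ × ℝ → ℝ, AdmR R u ∧ (∫ p in GamR R, (u p) ^ 2) ≠ 0 ∧
    r = (∫ p in GamR R, gradSq2 u p) / ∫ p in GamR R, (u p) ^ 2}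

/-- First Rayleigh quotient `λ₁(Γ)` of the Dirichlet Laplacian on the broken guide `Γ`. -/
def lamG : ℝ :=
  sInf {r | ∃ u : ℝ × ℝ → ℝ, ContDiff ℝ 1 u ∧ HasCompactSupport u ∧ tsupport u ⊆ Gam ∧
    (∫ p in Gam, (u p) ^ 2) ≠ 0 ∧
    r = (∫ p in Gam, gradSq2 u p) / ∫ p in Gam, (u p) ^ 2}

/-- `ω = √(π² − λ₁(Γ))`. -/
def omega : ℝ := Real.sqrt (π ^ 2 - lamG)

/-- Ground energy `μ(L)` of the Sturm–Liouville operator `q ↦ -q'' + λ q` on `(L,∞)`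
with Neumann condition at `L` and potential `λ(t) = λ₁(Γ_t)`, defined as the infimum of
Rayleigh quotients over (`C¹` representatives of) `H¹(L,∞)`. -/
def muSL (L : ℝ) : ℝ :=
  sInf {r | ∃ q : ℝ → ℝ, ContDiff ℝ 1 q ∧
    IntegrableOn (fun t => (q t) ^ 2) (Set.Ioi L) ∧
    IntegrableOn (fun t => (deriv q t) ^ 2) (Set.Ioi L) ∧
    (∫ t in Set.Ioi L, (q t) ^ 2) ≠ 0 ∧
    r = (∫ t in Set.Ioi L, ((deriv q t) ^ 2 + lamR t * (q t) ^ 2)) /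
      ∫ t in Set.Ioi L, (q t) ^ 2}

open Filter Topology

/-! ### Calculus on the line -/

lemma integral_riccati_mul_sq_le {a b : ℝ} (hab : a ≤ b) {f f' T T' : ℝ → ℝ}
    (hf : ∀ x ∈ Icc a b, HasDerivAt f (f' x) x) (hf' : ContinuousOn f' (Icc a b))
    (hT : ∀ x ∈ Icc a b, HasDerivAt T (T' x) x) (hT' : ContinuousOn T' (Icc a b))
    (hfa : f a = 0) (hfb : f b = 0) :
    ∫ x in a..b, -(T' x + T x ^ 2) * f x ^ 2 ≤ ∫ x in a..b, f' x ^ 2 := by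
  rw [← uIcc_of_le hab] at hf hf' hT hT'
  have hfc : ContinuousOn f (uIcc a b) := fun x hx => (hf x hx).continuousAt.continuousWithinAt
  have hTc : ContinuousOn T (uIcc a b) := fun x hx => (hT x hx).continuousAt.continuousWithinAt
  have hboundary : ∫ x in a..b, (T' x * f x ^ 2 + T x * (2 * f x * f' x)) = 0 := by
    rw [intervalIntegral.integral_eq_sub_of_hasDerivAt (f := fun x => T x * f x ^ 2)
      (fun x hx => ((hT x hx).mul ((hf x hx).pow 2)).congr_deriv (by simp))
      (ContinuousOn.intervalIntegrable (by fun_prop))]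
    simp [hfa, hfb]
  calc ∫ x in a..b, -(T' x + T x ^ 2) * f x ^ 2
      = ∫ x in a..b, (-(T' x + T x ^ 2) * f x ^ 2
          + (T' x * f x ^ 2 + T x * (2 * f x * f' x))) := by
        rw [intervalIntegral.integral_add (ContinuousOn.intervalIntegrable (by fun_prop))
          (ContinuousOn.intervalIntegrable (by fun_prop)), hboundary, add_zero]
    _ ≤ ∫ x in a..b, f' x ^ 2 := by
        refine intervalIntegral.integral_mono_on hab
          (ContinuousOn.intervalIntegrable (by fun_prop))
          (ContinuousOn.intervalIntegrable (by fun_prop)) fun x _ => ?_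
        nlinarith [sq_nonneg (f' x - T x * f x)]

lemma sq_mul_integral_sq_le_of_lt_pi_div {a b k : ℝ} (hab : a < b) (hk₀ : 0 ≤ k)
    (hk : k < π / (b - a)) {f f' : ℝ → ℝ} (hf : ∀ x ∈ Icc a b, HasDerivAt f (f' x) x)
    (hf' : ContinuousOn f' (Icc a b)) (hfa : f a = 0) (hfb : f b = 0) :
    k ^ 2 * ∫ x in a..b, f x ^ 2 ≤ ∫ x in a..b, f' x ^ 2 := by
  set θ : ℝ → ℝ := fun x => k * (x - (a + b) / 2) with hθ
  have hkπ : k * (b - a) < π := (lt_div_iff₀ (sub_pos.2 hab)).1 hk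
  have hcos : ∀ x ∈ Icc a b, cos (θ x) ≠ 0 := fun x hx =>
    (cos_pos_of_mem_Ioo ⟨by simp only [hθ]; nlinarith [hx.1],
      by simp only [hθ]; nlinarith [hx.2]⟩).ne'
  have hT : ∀ x ∈ Icc a b,
      HasDerivAt (fun x => -k * tan (θ x)) (-k * (1 / cos (θ x) ^ 2 * k)) x := fun x hx => by
    have hθ' : HasDerivAt θ k x := by
      simpa using ((hasDerivAt_id x).sub_const ((a + b) / 2)).const_mul k
    exact ((hasDerivAt_tan (hcos x hx)).comp x hθ').const_mul (-k)
  have hT' : ContinuousOn (fun x => -k * (1 / cos (θ x) ^ 2 * k)) (Icc a b) := by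
    have : Continuous θ := by fun_prop
    exact continuousOn_const.mul ((continuousOn_const.div (by fun_prop)
      fun x hx => pow_ne_zero 2 (hcos x hx)).mul continuousOn_const)
  have hriccati : ∀ x ∈ Icc a b,
      -(-k * (1 / cos (θ x) ^ 2 * k) + (-k * tan (θ x)) ^ 2) = k ^ 2 := fun x hx => by
    have := hcos x hx
    rw [tan_eq_sin_div_cos]
    field_simp
    linear_combination -k ^ 2 * sin_sq_add_cos_sq (θ x)
  rw [← intervalIntegral.integral_const_mul]
  refine le_of_eq_of_le (intervalIntegral.integral_congr fun x hx => ?_)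
    (integral_riccati_mul_sq_le hab.le hf hf' hT hT' hfa hfb)
  rw [uIcc_of_le hab.le] at hx
  simp only [hriccati x hx]

lemma pi_div_sq_mul_integral_sq_le {a b : ℝ} (hab : a < b) {f f' : ℝ → ℝ}
    (hf : ∀ x ∈ Icc a b, HasDerivAt f (f' x) x) (hf' : ContinuousOn f' (Icc a b))
    (hfa : f a = 0) (hfb : f b = 0) :
    (π / (b - a)) ^ 2 * ∫ x in a..b, f x ^ 2 ≤ ∫ x in a..b, f' x ^ 2 := by
  have hcont : Continuous fun k : ℝ => k ^ 2 * ∫ x in a..b, f x ^ 2 := by fun_prop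
  refine le_of_tendsto (hcont.continuousWithinAt (s := Iio (π / (b - a)))) ?_
  filter_upwards [Ioo_mem_nhdsLT (div_pos pi_pos (sub_pos.2 hab))] with k hk
  exact sq_mul_integral_sq_le_of_lt_pi_div hab hk.1.le hk.2 hf hf' hfa hfb

lemma eqOn_zero_of_monotoneOn_of_integrableOn_Ioi {f : ℝ → ℝ} {a : ℝ}
    (hmono : MonotoneOn f (Ici a)) (hnonneg : ∀ t ∈ Ici a, 0 ≤ f t)
    (hint : IntegrableOn f (Ioi a)) : EqOn f 0 (Ici a) := by
  intro t ht
  by_contra hft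
  have hpos : 0 < f t := (hnonneg t ht).lt_of_ne' hft
  have hconst : IntegrableOn (fun _ : ℝ => f t) (Ioi t) := by
    refine Integrable.mono' (hint.mono_set (Ioi_subset_Ioi ht)) aestronglyMeasurable_const ?_
    refine (ae_restrict_mem measurableSet_Ioi).mono fun s hs => ?_
    rw [norm_of_nonneg hpos.le]
    exact hmono ht (ht.out.trans hs.out.le) hs.out.le
  simp [integrableOn_const_iff, hpos.ne'] at hconst

lemma monotoneOn_sq_of_nonneg_mul_deriv_deriv {q q' q'' : ℝ → ℝ} {a : ℝ}
    (hq : ∀ t ∈ Ici a, HasDerivAt q (q' t) t) (hq' : ∀ t ∈ Ici a, HasDerivAt q' (q'' t) t)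
    (ha : q' a = 0) (hnonneg : ∀ t ∈ Ioi a, 0 ≤ q t * q'' t) :
    MonotoneOn (fun t => q t ^ 2) (Ici a) := by
  have hqq' : ∀ t ∈ Ici a, HasDerivAt (fun t => q t * q' t) (q' t * q' t + q t * q'' t) t :=
    fun t ht => (hq t ht).mul (hq' t ht)
  have hmono : MonotoneOn (fun t => q t * q' t) (Ici a) := by
    refine monotoneOn_of_hasDerivWithinAt_nonneg (convex_Ici a)
      (fun t ht => (hqq' t ht).continuousAt.continuousWithinAt)
      (fun t ht => (hqq' t (interior_subset ht)).hasDerivWithinAt) fun t ht => ?_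
    rw [interior_Ici] at ht
    exact add_nonneg (mul_self_nonneg _) (hnonneg t ht)
  refine monotoneOn_of_hasDerivWithinAt_nonneg (convex_Ici a)
    (fun t ht => ((hq t ht).pow 2).continuousAt.continuousWithinAt)
    (fun t ht => ((hq t (interior_subset ht)).pow 2).hasDerivWithinAt) fun t ht => ?_
  have hta : t ∈ Ici a := interior_subset ht
  have : 0 ≤ q t * q' t := by simpa [ha] using hmono self_mem_Ici hta hta
  simpa [mul_assoc] using this

lemma lt_eigenvalue_of_forall_le_potential {V q : ℝ → ℝ} {a c μ : ℝ} (hV : ∀ t ∈ Ioi a, c ≤ V t)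
    (hq : ContDiff ℝ 2 q) (heq : ∀ t ∈ Ioi a, -deriv (deriv q) t + V t * q t = μ * q t)
    (hneumann : deriv q a = 0) (hint : IntegrableOn (fun t => q t ^ 2) (Ioi a))
    (hne : ∃ t ∈ Ici a, q t ≠ 0) : c < μ := by
  by_contra! hμ
  have hq' : ContDiff ℝ 1 (deriv q) := (contDiff_succ_iff_deriv (n := 1)).1 hq |>.2.2
  have hmono : MonotoneOn (fun t => q t ^ 2) (Ici a) := by
    refine monotoneOn_sq_of_nonneg_mul_deriv_deriv
      (fun t _ => (hq.differentiable two_ne_zero t).hasDerivAt)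
      (fun t _ => (hq'.differentiable one_ne_zero t).hasDerivAt) hneumann fun t ht => ?_
    have hq'' : q t * deriv (deriv q) t = (V t - μ) * q t ^ 2 := by
      linear_combination -q t * heq t ht
    rw [hq'']
    exact mul_nonneg (by linarith [hV t ht]) (sq_nonneg _)
  obtain ⟨t, ht, hqt⟩ := hne
  exact hqt (pow_eq_zero_iff two_ne_zero |>.1
    (eqOn_zero_of_monotoneOn_of_integrableOn_Ioi hmono (fun _ _ => sq_nonneg _) hint ht))

lemma setIntegral_deriv_sq_add_mul_sq_le {V q : ℝ → ℝ} {s : Set ℝ} {r : ℝ} (hV : ∀ t, 0 ≤ V t)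
    (hVr : ∀ t ∈ tsupport q, V t ≤ r) (hint : IntegrableOn (fun t => q t ^ 2) s)
    (hint' : IntegrableOn (fun t => deriv q t ^ 2) s) :
    ∫ t in s, (deriv q t ^ 2 + V t * q t ^ 2) ≤
      (∫ t in s, deriv q t ^ 2) + r * ∫ t in s, q t ^ 2 := by
  have hpotential : ∀ t, V t * q t ^ 2 ≤ r * q t ^ 2 := fun t => by
    by_cases ht : t ∈ tsupport q
    · exact mul_le_mul_of_nonneg_right (hVr t ht) (sq_nonneg _)
    · simp [image_eq_zero_of_notMem_tsupport ht]
  rw [← integral_const_mul, ← integral_add hint' (hint.const_mul r)]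
  -- The left-hand integrand need not be integrable; its Bochner integral is then `0`.
  refine integral_mono_of_nonneg (.of_forall fun t => ?_) (hint'.add (hint.const_mul r))
    (.of_forall fun t => ?_)
  · exact add_nonneg (sq_nonneg _) (mul_nonneg (hV t) (sq_nonneg _))
  · exact add_le_add le_rfl (hpotential t)

lemma integral_comp_sub_div_const {n : ℝ} (hn : 0 < n) (c : ℝ) (f : ℝ → ℝ) :
    ∫ t, f ((t - c) / n) = n * ∫ t, f t := by
  rw [integral_sub_right_eq_self (fun t => f (t / n)) c, Measure.integral_comp_div,
    abs_of_pos hn, smul_eq_mul]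

lemma deriv_comp_sub_div_const {f : ℝ → ℝ} (hf : Differentiable ℝ f) (n c t : ℝ) :
    deriv (fun t => f ((t - c) / n)) t = deriv f ((t - c) / n) / n := by
  have haffine : HasDerivAt (fun t => (t - c) / n) (1 / n) t :=
    ((hasDerivAt_id t).sub_const c).div_const n
  exact ((hf _).hasDerivAt.comp t haffine).deriv.trans (mul_one_div _ _)

-- Dilating a fixed bump by the factor `n` divides its Rayleigh quotient by `n ^ 2`.
lemma exists_contDiff_integral_deriv_sq_le (T : ℝ) {ε : ℝ} (hε : 0 < ε) :
    ∃ q : ℝ → ℝ, ContDiff ℝ 1 q ∧ HasCompactSupport q ∧ tsupport q ⊆ Ioi T ∧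
      0 < ∫ t, q t ^ 2 ∧ ∫ t, deriv q t ^ 2 ≤ ε * ∫ t, q t ^ 2 := by
  obtain ⟨b, hbsupp, hbcompact, hb, -, hb₀⟩ :=
    exists_contDiff_tsupport_subset (n := 1) (Icc_mem_nhds (neg_one_lt_zero (R := ℝ)) one_pos)
  have hmass : 0 < ∫ t, b t ^ 2 :=
    (hb.continuous.pow 2).integral_pos_of_hasCompactSupport_nonneg_nonzero
      (hbcompact.comp_left (g := (· ^ 2)) (zero_pow two_ne_zero)) (fun t => sq_nonneg _)
      (x := 0) (by simp [hb₀])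
  obtain ⟨n, hn, hn₀⟩ : ∃ n : ℝ, (∫ t, deriv b t ^ 2) / (∫ t, b t ^ 2) / n ^ 2 ≤ ε ∧ 0 < n := by
    have hlim : Tendsto (fun n : ℝ => (∫ t, deriv b t ^ 2) / (∫ t, b t ^ 2) / n ^ 2) atTop (𝓝 0) :=
      (tendsto_pow_atTop two_ne_zero).const_div_atTop _
    exact ((hlim.eventually_le_const hε).and (eventually_gt_atTop 0)).exists
  set c := T + n + 1 with hc
  have hsupp : Function.support (fun t => b ((t - c) / n)) ⊆ Icc (T + 1) (c + n) := fun t ht => by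
    have ht' := hbsupp (subset_tsupport b ht)
    rw [mem_Icc, le_div_iff₀ hn₀, div_le_iff₀ hn₀] at ht'
    exact ⟨by linarith, by linarith⟩
  refine ⟨fun t => b ((t - c) / n), by fun_prop, .of_support_subset_isCompact isCompact_Icc hsupp,
    (closure_minimal hsupp isClosed_Icc).trans fun t ht => (lt_add_one T).trans_le ht.1, ?_, ?_⟩
  · rw [integral_comp_sub_div_const hn₀ c fun t => b t ^ 2]
    positivity
  · simp only [deriv_comp_sub_div_const (hb.differentiable one_ne_zero), div_pow]
    rw [integral_div, integral_comp_sub_div_const hn₀ c fun t => deriv b t ^ 2,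
      integral_comp_sub_div_const hn₀ c fun t => b t ^ 2, div_le_iff₀ (by positivity)]
    rw [div_div, div_le_iff₀ (by positivity)] at hn
    calc n * ∫ t, deriv b t ^ 2 ≤ n * (ε * ((∫ t, b t ^ 2) * n ^ 2)) := by gcongr
      _ = ε * (n * ∫ t, b t ^ 2) * n ^ 2 := by ring

/-! ### Integrals of continuous functions -/

section Integration

variable {E : Type*} [NormedAddCommGroup E] [MeasurableSpace E] {ν : Measure E}

lemma integrableOn_of_continuous_of_isBounded [ProperSpace E] [BorelSpace E]
    [IsFiniteMeasureOnCompacts ν] {s : Set E} (hs : Bornology.IsBounded s) {f : E → ℝ}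
    (hf : Continuous f) : IntegrableOn f s ν :=
  (hf.continuousOn.integrableOn_compact hs.isCompact_closure).mono_set subset_closure

lemma continuous_setIntegral_of_isBounded [ProperSpace E] [BorelSpace E]
    [IsFiniteMeasureOnCompacts ν] {X : Type*} [TopologicalSpace X] [FirstCountableTopology X]
    [LocallyCompactSpace X] {s : Set E} (hs : Bornology.IsBounded s) {F : X → E → ℝ}
    (hF : Continuous (Function.uncurry F)) : Continuous fun x => ∫ p in s, F x p ∂ν := by
  have hclosure : (ν.restrict s).restrict (closure s) = ν.restrict s := by
    rw [Measure.restrict_restrict isClosed_closure.measurableSet,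
      inter_eq_self_of_subset_right subset_closure]
  simpa only [hclosure] using
    continuous_parametric_integral_of_continuous (μ := ν.restrict s) hF hs.isCompact_closure

lemma setIntegral_pos_of_isOpen [ν.IsOpenPosMeasure] {s : Set E} (hs : IsOpen s) {f : E → ℝ}
    (hf : Continuous f) (hint : IntegrableOn f s ν) (hnonneg : 0 ≤ f) {x : E} (hx : x ∈ s)
    (hfx : f x ≠ 0) : 0 < ∫ p in s, f p ∂ν :=
  (setIntegral_pos_iff_support_of_nonneg_ae (.of_forall hnonneg) hint).2 <|
    (hf.isOpen_support.inter hs).measure_pos ν ⟨x, hfx, hx⟩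

lemma integrable_sq_of_hasCompactSupport [OpensMeasurableSpace E] [IsFiniteMeasureOnCompacts ν]
    {f : E → ℝ} (hf : Continuous f) (hcompact : HasCompactSupport f) :
    Integrable (fun x => f x ^ 2) ν := by
  have hsq : HasCompactSupport fun x => f x ^ 2 :=
    hcompact.comp_left (g := fun a : ℝ => a ^ 2) (zero_pow two_ne_zero)
  have hcont : Continuous fun x => f x ^ 2 := hf.pow 2
  exact hcont.integrable_of_hasCompactSupport hsq

lemma exists_contDiff_setIntegral_sq_pos [NormedSpace ℝ E] [FiniteDimensional ℝ E] [BorelSpace E]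
    [ν.IsOpenPosMeasure] [IsFiniteMeasureOnCompacts ν] {s : Set E} (hs : IsOpen s)
    (hne : s.Nonempty) :
    ∃ u : E → ℝ, ContDiff ℝ 1 u ∧ HasCompactSupport u ∧ tsupport u ⊆ s ∧
      0 < ∫ p in s, u p ^ 2 ∂ν := by
  obtain ⟨x, hx⟩ := hne
  obtain ⟨u, hsupp, hcompact, hu, -, hux⟩ :=
    exists_contDiff_tsupport_subset (n := 1) (hs.mem_nhds hx)
  have hcont : Continuous fun p => u p ^ 2 := hu.continuous.pow 2
  exact ⟨u, hu, hcompact, hsupp, setIntegral_pos_of_isOpen hs hcont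
    (integrable_sq_of_hasCompactSupport hu.continuous hcompact).integrableOn
    (fun p => sq_nonneg (u p)) hx (pow_ne_zero 2 (hux ▸ one_ne_zero))⟩

end Integration

/-! ### Integration on the plane -/

lemma gradSq2_nonneg (u : ℝ × ℝ → ℝ) (p : ℝ × ℝ) : 0 ≤ gradSq2 u p :=
  add_nonneg (sq_nonneg _) (sq_nonneg _)

lemma continuous_gradSq2 {u : ℝ × ℝ → ℝ} (hu : ContDiff ℝ 1 u) : Continuous (gradSq2 u) := by
  have := hu.continuous_fderiv one_ne_zero
  unfold gradSq2
  fun_prop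

lemma gradSq2_comp_swap (u : ℝ × ℝ → ℝ) (p : ℝ × ℝ) :
    gradSq2 (u ∘ Prod.swap) p = gradSq2 u p.swap := by
  have hfderiv : fderiv ℝ (u ∘ Prod.swap) p
      = (fderiv ℝ u p.swap).comp (ContinuousLinearEquiv.prodComm ℝ ℝ ℝ : ℝ × ℝ →L[ℝ] ℝ × ℝ) :=
    (ContinuousLinearEquiv.prodComm ℝ ℝ ℝ).comp_right_fderiv
  simp [gradSq2, hfderiv, add_comm]

lemma gradSq2_comp {g : ℝ → ℝ} {g' : ℝ} {w : ℝ × ℝ → ℝ} {p : ℝ × ℝ}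
    (hg : HasDerivAt g g' (w p)) (hw : DifferentiableAt ℝ w p) :
    gradSq2 (g ∘ w) p = g' ^ 2 * gradSq2 w p := by
  simp only [gradSq2, (hg.comp_hasFDerivAt p hw.hasFDerivAt).fderiv, smul_apply, smul_eq_mul]
  ring

lemma setIntegral_prod_mono_of_slices {s t : Set ℝ} (hs : MeasurableSet s) {f g : ℝ × ℝ → ℝ}
    (hf : IntegrableOn f (s ×ˢ t)) (hg : IntegrableOn g (s ×ˢ t))
    (h : ∀ x ∈ s, ∫ y in t, f (x, y) ≤ ∫ y in t, g (x, y)) :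
    ∫ p in s ×ˢ t, f p ≤ ∫ p in s ×ˢ t, g p := by
  rw [Measure.volume_eq_prod] at hf hg ⊢
  rw [setIntegral_prod f hf, setIntegral_prod g hg]
  rw [IntegrableOn, ← Measure.prod_restrict] at hf hg
  exact setIntegral_mono_on hf.integral_prod_left hg.integral_prod_left hs h

lemma setIntegral_Ioo_eq_intervalIntegral {a b : ℝ} (hab : a ≤ b) (f : ℝ → ℝ) :
    ∫ x in Ioo a b, f x = ∫ x in a..b, f x := by
  rw [intervalIntegral.integral_of_le hab, integral_Ioc_eq_integral_Ioo]

lemma pi_div_sq_mul_setIntegral_prod_sq_le {s : Set ℝ} (hs : MeasurableSet s)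
    (hsb : Bornology.IsBounded s) {a b : ℝ} (hab : a < b) {u : ℝ × ℝ → ℝ} (hu : ContDiff ℝ 1 u)
    (hua : ∀ x ∈ s, u (x, a) = 0) (hub : ∀ x ∈ s, u (x, b) = 0) :
    (π / (b - a)) ^ 2 * ∫ p in s ×ˢ Ioo a b, u p ^ 2 ≤ ∫ p in s ×ˢ Ioo a b, gradSq2 u p := by
  have hbounded := hsb.prod (Metric.isBounded_Ioo a b)
  have : Continuous (fderiv ℝ u) := hu.continuous_fderiv one_ne_zero
  have hslice : ∀ x y, HasDerivAt (fun y => u (x, y)) (fderiv ℝ u (x, y) (0, 1)) y := fun x y =>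
    (hu.differentiable one_ne_zero (x, y)).hasFDerivAt.comp_hasDerivAt y
      ((hasDerivAt_const y x).prodMk (hasDerivAt_id y))
  calc (π / (b - a)) ^ 2 * ∫ p in s ×ˢ Ioo a b, u p ^ 2
      = ∫ p in s ×ˢ Ioo a b, (π / (b - a)) ^ 2 * u p ^ 2 := (integral_const_mul _ _).symm
    _ ≤ ∫ p in s ×ˢ Ioo a b, fderiv ℝ u p (0, 1) ^ 2 := by
        refine setIntegral_prod_mono_of_slices hs
          (integrableOn_of_continuous_of_isBounded hbounded (by fun_prop))
          (integrableOn_of_continuous_of_isBounded hbounded (by fun_prop)) fun x hx => ?_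
        simp only [setIntegral_Ioo_eq_intervalIntegral hab.le,
          intervalIntegral.integral_const_mul]
        exact pi_div_sq_mul_integral_sq_le hab (fun y _ => hslice x y)
          (by fun_prop) (hua x hx) (hub x hx)
    _ ≤ ∫ p in s ×ˢ Ioo a b, gradSq2 u p :=
        integral_mono (integrableOn_of_continuous_of_isBounded hbounded (by fun_prop))
          (integrableOn_of_continuous_of_isBounded hbounded (continuous_gradSq2 hu))
          fun p => le_add_of_nonneg_left (sq_nonneg _)

lemma intervalIntegral_primitive {a b : ℝ} {f : ℝ → ℝ} (hf : Continuous f) :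
    ∫ x in a..b, ∫ y in a..x, f y = ∫ x in a..b, (b - x) * f x := by
  have hparts := intervalIntegral.integral_mul_deriv_eq_deriv_mul (a := a) (b := b)
    (u := fun x => ∫ y in a..x, f y) (v := fun x => x - b) (u' := f) (v' := fun _ => 1)
    (fun x _ => hf.integral_hasStrictDerivAt a x |>.hasDerivAt)
    (fun x _ => (hasDerivAt_id x).sub_const b) (hf.intervalIntegrable a b)
    intervalIntegrable_const
  simp only [mul_one, sub_self, mul_zero, intervalIntegral.integral_same, zero_mul, zero_sub,
    ← intervalIntegral.integral_neg] at hparts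
  rw [hparts]
  exact intervalIntegral.integral_congr fun x _ => by ring

lemma intervalIntegral_comp_min {a b x : ℝ} (hx : x ∈ Icc a b) {f : ℝ → ℝ} (hf : Continuous f) :
    ∫ y in a..b, f (min x y) = (∫ y in a..x, f y) + (b - x) * f x := by
  have hcont : Continuous fun y => f (min x y) := by fun_prop
  rw [← intervalIntegral.integral_add_adjacent_intervals (hcont.intervalIntegrable a x)
    (hcont.intervalIntegrable x b)]
  congr 1
  · refine intervalIntegral.integral_congr fun y hy => ?_
    rw [uIcc_of_le hx.1] at hy
    simp only [min_eq_right hy.2]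
  · rw [← smul_eq_mul, ← intervalIntegral.integral_const]
    refine intervalIntegral.integral_congr fun y hy => ?_
    rw [uIcc_of_le hx.2] at hy
    simp only [min_eq_left hy.1]

lemma setIntegral_square_comp_min {a b : ℝ} (hab : a ≤ b) {f : ℝ → ℝ} (hf : Continuous f) :
    ∫ p in Ioo a b ×ˢ Ioo a b, f (min p.1 p.2) = 2 * ∫ m in a..b, (b - m) * f m := by
  have hbounded := (Metric.isBounded_Ioo a b).prod (Metric.isBounded_Ioo a b)
  have hint : IntegrableOn (fun p : ℝ × ℝ => f (min p.1 p.2)) (Ioo a b ×ˢ Ioo a b) :=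
    integrableOn_of_continuous_of_isBounded hbounded (by fun_prop)
  have hprimitive : Continuous fun x => ∫ y in a..x, f y :=
    intervalIntegral.continuous_primitive (fun _ _ => hf.intervalIntegrable _ _) a
  calc ∫ p in Ioo a b ×ˢ Ioo a b, f (min p.1 p.2)
      = ∫ x in Ioo a b, ∫ y in Ioo a b, f (min x y) := setIntegral_prod _ hint
    _ = ∫ x in Ioo a b, ((∫ y in a..x, f y) + (b - x) * f x) :=
        setIntegral_congr_fun measurableSet_Ioo fun x hx =>
          (setIntegral_Ioo_eq_intervalIntegral hab _).trans
            (intervalIntegral_comp_min (Ioo_subset_Icc_self hx) hf)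
    _ = ∫ x in a..b, ((∫ y in a..x, f y) + (b - x) * f x) :=
        setIntegral_Ioo_eq_intervalIntegral hab _
    _ = 2 * ∫ m in a..b, (b - m) * f m := by
        rw [intervalIntegral.integral_add (hprimitive.intervalIntegrable a b)
          (Continuous.intervalIntegrable (by fun_prop) a b), intervalIntegral_primitive hf, two_mul]

/-! ### Geometry of the finite guides -/

lemma isOpen_gam : IsOpen Gam := by
  have hmin : Continuous fun p : ℝ × ℝ => min p.1 p.2 := by fun_prop
  exact (isOpen_lt continuous_const hmin).inter (isOpen_lt hmin continuous_const)

lemma isOpen_box (L : ℝ) : IsOpen (Box L) :=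
  (isOpen_lt (f := fun p : ℝ × ℝ => |p.1 + 1|) (by fun_prop) continuous_const).inter
    (isOpen_lt (f := fun p : ℝ × ℝ => |p.2 + 1|) (by fun_prop) continuous_const)

lemma isOpen_gamR (R : ℝ) : IsOpen (GamR R) := isOpen_gam.inter (isOpen_box _)

lemma mem_gamR_iff {R : ℝ} {p : ℝ × ℝ} :
    p ∈ GamR R ↔ -1 < p.1 ∧ p.1 < R ∧ -1 < p.2 ∧ p.2 < R ∧ (p.1 < 0 ∨ p.2 < 0) := by
  simp only [GamR, Gam, Box, mem_inter_iff, mem_ofPred_eq, lt_min_iff, min_lt_iff, abs_lt]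
  constructor
  · rintro ⟨⟨⟨h₁, h₂⟩, hneg⟩, ⟨-, h₁'⟩, -, h₂'⟩
    exact ⟨h₁, by linarith, h₂, by linarith, hneg⟩
  · rintro ⟨h₁, h₁', h₂, h₂', hneg⟩
    exact ⟨⟨⟨h₁, h₂⟩, hneg⟩, ⟨by linarith, by linarith⟩, by linarith, by linarith⟩

lemma box_mono {L M : ℝ} (h : L ≤ M) : Box L ⊆ Box M :=
  fun _ hp => ⟨hp.1.trans_le h, hp.2.trans_le h⟩

lemma gamR_mono {L M : ℝ} (h : L ≤ M) : GamR L ⊆ GamR M :=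
  inter_subset_inter_right _ (box_mono (by gcongr))

lemma gamR_nonempty {R : ℝ} (hR : -1 < R) : (GamR R).Nonempty := by
  obtain ⟨x, hx, hxR⟩ := exists_between (lt_min hR (neg_one_lt_zero (R := ℝ)))
  rw [lt_min_iff] at hxR
  exact ⟨(x, x), mem_gamR_iff.2 ⟨hx, hxR.1, hx, hxR.1, .inl hxR.2⟩⟩

lemma isBounded_gamR (R : ℝ) : Bornology.IsBounded (GamR R) :=
  (isCompact_Icc.prod isCompact_Icc).isBounded.subset
    (fun _ hp => let ⟨h₁, h₁', h₂, h₂', _⟩ := mem_gamR_iff.1 hp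
      ⟨⟨h₁.le, h₁'.le⟩, h₂.le, h₂'.le⟩ : GamR R ⊆ Icc (-1) R ×ˢ Icc (-1) R)

lemma swap_mem_gamR {R : ℝ} {p : ℝ × ℝ} : p.swap ∈ GamR R ↔ p ∈ GamR R := by
  simp only [mem_gamR_iff, Prod.fst_swap, Prod.snd_swap]
  tauto

lemma mem_dirB_iff {R : ℝ} {p : ℝ × ℝ} :
    p ∈ DirB R ↔ p ∈ closure (GamR R) ∧ p ∈ Box (R + 1) ∧ p ∉ Gam := by
  have hclosure : p ∈ closure (GamR R) → p ∈ closure (Box (R + 1)) :=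
    fun hp => closure_mono inter_subset_right hp
  rw [DirB, Sig, sdiff_self_inter, (isOpen_gamR R).frontier_eq, (isOpen_box _).frontier_eq]
  simp only [GamR, Set.mem_sdiff, mem_inter_iff] at hclosure ⊢
  tauto

lemma min_of_mem_dirB {R : ℝ} {p : ℝ × ℝ} (hp : p ∈ DirB R) :
    min p.1 p.2 = -1 ∨ min p.1 p.2 = 0 := by
  obtain ⟨hclosure, -, hp⟩ := mem_dirB_iff.1 hp
  have hmin : Continuous fun p : ℝ × ℝ => min p.1 p.2 := by fun_prop
  have hmem : min p.1 p.2 ∈ Icc (-1) 0 :=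
    closure_minimal (t := (fun p : ℝ × ℝ => min p.1 p.2) ⁻¹' Icc (-1) 0)
      (fun _ h => Ioo_subset_Icc_self h.1) (isClosed_Icc.preimage hmin) hclosure
  by_contra! hne
  exact hp ⟨hmem.1.lt_of_ne' hne.1, hmem.2.lt_of_ne hne.2⟩

lemma dirB_mono {L M : ℝ} (h : L ≤ M) : DirB L ⊆ DirB M := fun p hp => by
  obtain ⟨hclosure, hbox, hgam⟩ := mem_dirB_iff.1 hp
  exact mem_dirB_iff.2 ⟨closure_mono (gamR_mono h) hclosure, box_mono (by gcongr) hbox, hgam⟩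

lemma swap_mem_dirB {R : ℝ} {p : ℝ × ℝ} (hp : p ∈ DirB R) : p.swap ∈ DirB R := by
  obtain ⟨hclosure, hbox, hgam⟩ := mem_dirB_iff.1 hp
  refine mem_dirB_iff.2 ⟨?_, hbox.symm, fun h => hgam ?_⟩
  · exact map_mem_closure continuous_swap hclosure fun q hq => swap_mem_gamR.2 hq
  · simpa only [Gam, mem_ofPred_eq, Prod.fst_swap, Prod.snd_swap, min_comm] using h

lemma mk_mem_dirB {R x y : ℝ} (hx : x ∈ Ico 0 R) (hy : y = -1 ∨ y = 0) : (x, y) ∈ DirB R := by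
  have hxR : 0 < R := hx.1.trans_lt hx.2
  refine mem_dirB_iff.2 ⟨?_, ?_, ?_⟩
  · have hslice : ({x} : Set ℝ) ×ˢ Ioo (-1 : ℝ) 0 ⊆ GamR R := by
      rintro ⟨_, z⟩ ⟨rfl, hz⟩
      exact mem_gamR_iff.2
        ⟨neg_one_lt_zero.trans_le hx.1, hx.2, hz.1, hz.2.trans hxR, .inr hz.2⟩
    refine closure_mono hslice ?_
    rw [closure_prod_eq, closure_Ioo (by norm_num), closure_singleton]
    exact ⟨rfl, by rcases hy with rfl | rfl <;> simp⟩
  · simp only [Box, mem_ofPred_eq, abs_lt]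
    rcases hy with rfl | rfl <;> refine ⟨⟨?_, ?_⟩, ?_, ?_⟩ <;> linarith [hx.1, hx.2]
  · simp only [Gam, mem_ofPred_eq, lt_min_iff, min_lt_iff, not_and_or, not_lt, not_or]
    rcases hy with rfl | rfl
    · exact .inl (.inr le_rfl)
    · exact .inr ⟨hx.1, le_rfl⟩

lemma gamR_zero : GamR 0 = Ioo (-1 : ℝ) 0 ×ˢ Ioo (-1 : ℝ) 0 := by
  ext p
  simp only [mem_gamR_iff, mem_prod, mem_Ioo]
  tauto

lemma gamR_eq_union {L R : ℝ} (hL : 0 ≤ L) (hLR : L ≤ R) :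
    GamR R = GamR L ∪ (Ico L R ×ˢ Ioo (-1) 0 ∪ Ioo (-1) 0 ×ˢ Ico L R) := by
  ext p
  simp only [mem_gamR_iff, mem_union, mem_prod, mem_Ioo, mem_Ico]
  grind

lemma setIntegral_gamR_eq_add {L R : ℝ} (hL : 0 ≤ L) (hLR : L ≤ R) {f : ℝ × ℝ → ℝ}
    (hf : Continuous f) :
    ∫ p in GamR R, f p = (∫ p in GamR L, f p)
      + ((∫ p in Ico L R ×ˢ Ioo (-1) 0, f p) + ∫ p in Ico L R ×ˢ Ioo (-1) 0, f p.swap) := by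
  have hint : IntegrableOn f (GamR R) :=
    integrableOn_of_continuous_of_isBounded (isBounded_gamR R) hf
  have hmeas : MeasurableSet (Ioo (-1) 0 ×ˢ Ico L R : Set (ℝ × ℝ)) :=
    measurableSet_Ioo.prod measurableSet_Ico
  have hswap : ∫ p in Ico L R ×ˢ Ioo (-1) 0, f p.swap = ∫ p in Ioo (-1) 0 ×ˢ Ico L R, f p :=
    setIntegral_prod_swap (μ := volume) (ν := volume) _ _ f
  have harms : Disjoint (Ico L R ×ˢ Ioo (-1) 0) (Ioo (-1) 0 ×ˢ Ico L R) :=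
    disjoint_left.2 fun p hp hp' => (hp'.1.2.trans_le hL).not_ge hp.1.1
  have hguide : Disjoint (GamR L) (Ico L R ×ˢ Ioo (-1) 0 ∪ Ioo (-1) 0 ×ˢ Ico L R) :=
    disjoint_left.2 fun p hp hp' => hp'.elim (fun h => (mem_gamR_iff.1 hp).2.1.not_ge h.1.1)
      fun h => (mem_gamR_iff.1 hp).2.2.2.1.not_ge h.2.1
  rw [gamR_eq_union hL hLR, integrableOn_union, integrableOn_union] at hint
  rw [gamR_eq_union hL hLR, setIntegral_union hguide
    ((measurableSet_Ico.prod measurableSet_Ioo).union hmeas) hint.1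
    (hint.2.1.union hint.2.2), setIntegral_union harms hmeas hint.2.1 hint.2.2, hswap]

lemma setIntegral_gamR_comp_min {L : ℝ} (hL : 0 ≤ L) {f : ℝ → ℝ} (hf : Continuous f) :
    ∫ p in GamR L, f (min p.1 p.2) = 2 * ∫ m in (-1)..0, (L - m) * f m := by
  have harm : ∫ p in Ico 0 L ×ˢ Ioo (-1) 0, f (min p.1 p.2) = L * ∫ m in (-1)..0, f m := by
    calc ∫ p in Ico 0 L ×ˢ Ioo (-1) 0, f (min p.1 p.2)
        = ∫ p in Ico 0 L ×ˢ Ioo (-1) 0, 1 * f p.2 :=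
          setIntegral_congr_fun (measurableSet_Ico.prod measurableSet_Ioo) fun p hp => by
            simp only [min_eq_right (hp.2.2.le.trans hp.1.1), one_mul]
      _ = L * ∫ m in (-1)..0, f m := by
          rw [Measure.volume_eq_prod, setIntegral_prod_mul (fun _ => 1) f,
            setIntegral_Ioo_eq_intervalIntegral (by norm_num)]
          simp [hL]
  rw [setIntegral_gamR_eq_add le_rfl hL (by fun_prop), gamR_zero,
    setIntegral_square_comp_min (by norm_num) hf]
  simp only [Prod.fst_swap, Prod.snd_swap, min_comm, harm]
  rw [← two_mul, ← mul_add, ← intervalIntegral.integral_const_mul,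
    ← intervalIntegral.integral_add (Continuous.intervalIntegrable (by fun_prop) _ _)
      (Continuous.intervalIntegrable (by fun_prop) _ _)]
  exact congrArg (2 * ·) (intervalIntegral.integral_congr fun m _ => by ring)

/-! ### Rayleigh quotients -/

lemma AdmR.comp_swap {R : ℝ} {u : ℝ × ℝ → ℝ} (hu : AdmR R u) : AdmR R (u ∘ Prod.swap) :=
  ⟨hu.1.comp (contDiff_snd.prodMk contDiff_fst), fun p hp => hu.2 p.swap (swap_mem_dirB hp)⟩

lemma AdmR.anti {L R : ℝ} (h : L ≤ R) {u : ℝ × ℝ → ℝ} (hu : AdmR R u) : AdmR L u :=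
  ⟨hu.1, fun p hp => hu.2 p (dirB_mono h hp)⟩

lemma admR_of_tsupport_subset_gam {R : ℝ} {u : ℝ × ℝ → ℝ} (hu : ContDiff ℝ 1 u)
    (hsupp : tsupport u ⊆ Gam) : AdmR R u :=
  ⟨hu, fun _ hp => image_eq_zero_of_notMem_tsupport fun h => (mem_dirB_iff.1 hp).2.2 (hsupp h)⟩

lemma setIntegral_gradSq2_div_nonneg (s : Set (ℝ × ℝ)) (u : ℝ × ℝ → ℝ) :
    0 ≤ (∫ p in s, gradSq2 u p) / ∫ p in s, u p ^ 2 :=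
  div_nonneg (integral_nonneg (gradSq2_nonneg u)) (integral_nonneg fun _ => sq_nonneg _)

lemma lamR_nonneg (R : ℝ) : 0 ≤ lamR R :=
  Real.sInf_nonneg <| by
    rintro _ ⟨u, -, -, rfl⟩
    exact setIntegral_gradSq2_div_nonneg _ u

lemma lamR_mul_setIntegral_sq_le {R : ℝ} {u : ℝ × ℝ → ℝ} (hu : AdmR R u) :
    lamR R * ∫ p in GamR R, u p ^ 2 ≤ ∫ p in GamR R, gradSq2 u p := by
  have hmass : 0 ≤ ∫ p in GamR R, u p ^ 2 := integral_nonneg fun _ => sq_nonneg _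
  rcases hmass.eq_or_lt with hzero | hpos
  · rw [← hzero, mul_zero]
    exact integral_nonneg (gradSq2_nonneg u)
  · rw [← le_div_iff₀ hpos]
    refine csInf_le ⟨0, ?_⟩ ⟨u, hu, hpos.ne', rfl⟩
    rintro _ ⟨v, -, -, rfl⟩
    exact setIntegral_gradSq2_div_nonneg _ v

lemma le_lamR {R c : ℝ} (hR : -1 < R)
    (h : ∀ u, AdmR R u → c * ∫ p in GamR R, u p ^ 2 ≤ ∫ p in GamR R, gradSq2 u p) :
    c ≤ lamR R := by
  refine le_csInf ?_ ?_
  · obtain ⟨u, hu, -, hsupp, hpos⟩ :=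
      exists_contDiff_setIntegral_sq_pos (ν := volume) (isOpen_gamR R) (gamR_nonempty hR)
    exact ⟨_, u, admR_of_tsupport_subset_gam hu (hsupp.trans inter_subset_left), hpos.ne', rfl⟩
  · rintro _ ⟨u, hu, hne, rfl⟩
    exact (le_div_iff₀ ((integral_nonneg fun _ => sq_nonneg _).lt_of_ne' hne)).2 (h u hu)

lemma le_lamG {c : ℝ}
    (h : ∀ u : ℝ × ℝ → ℝ, ContDiff ℝ 1 u → HasCompactSupport u → tsupport u ⊆ Gam →
      0 < ∫ p in Gam, u p ^ 2 → c ≤ (∫ p in Gam, gradSq2 u p) / ∫ p in Gam, u p ^ 2) :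
    c ≤ lamG := by
  refine le_csInf ?_ ?_
  · obtain ⟨u, hu, hcompact, hsupp, hpos⟩ := exists_contDiff_setIntegral_sq_pos (ν := volume)
      isOpen_gam ((gamR_nonempty neg_one_lt_zero).mono inter_subset_left)
    exact ⟨_, u, hu, hcompact, hsupp, hpos.ne', rfl⟩
  · rintro _ ⟨u, hu, hcompact, hsupp, hne, rfl⟩
    exact h u hu hcompact hsupp ((integral_nonneg fun _ => sq_nonneg _).lt_of_ne' hne)

lemma pi_sq_mul_setIntegral_arm_sq_le {L R : ℝ} (hL : 0 ≤ L) {u : ℝ × ℝ → ℝ} (hu : AdmR R u) :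
    π ^ 2 * ∫ p in Ico L R ×ˢ Ioo (-1) 0, u p ^ 2 ≤
      ∫ p in Ico L R ×ˢ Ioo (-1) 0, gradSq2 u p := by
  have hside : ∀ y, y = -1 ∨ y = 0 → ∀ x ∈ Ico L R, u (x, y) = 0 := fun y hy x hx =>
    hu.2 _ (mk_mem_dirB ⟨hL.trans hx.1, hx.2⟩ hy)
  simpa using pi_div_sq_mul_setIntegral_prod_sq_le measurableSet_Ico (Metric.isBounded_Ico L R)
    neg_one_lt_zero hu.1 (hside (-1) (.inl rfl)) (hside 0 (.inr rfl))

-- Restricting from `Γ_R` to `Γ_L` removes two strips on which every Rayleigh quotient is at least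
-- `π ^ 2 ≥ c`.
lemma mul_setIntegral_gamR_sq_le {L R c : ℝ} (hL : 0 ≤ L) (hLR : L ≤ R) (hc : c ≤ π ^ 2)
    {u : ℝ × ℝ → ℝ} (hu : AdmR R u)
    (hcu : c * ∫ p in GamR L, u p ^ 2 ≤ ∫ p in GamR L, gradSq2 u p) :
    c * ∫ p in GamR R, u p ^ 2 ≤ ∫ p in GamR R, gradSq2 u p := by
  have harm : ∀ {v : ℝ × ℝ → ℝ}, AdmR R v → c * ∫ p in Ico L R ×ˢ Ioo (-1) 0, v p ^ 2 ≤
      ∫ p in Ico L R ×ˢ Ioo (-1) 0, gradSq2 v p := fun hv =>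
    (mul_le_mul_of_nonneg_right hc (integral_nonneg fun _ => sq_nonneg _)).trans
      (pi_sq_mul_setIntegral_arm_sq_le hL hv)
  have hswap := harm hu.comp_swap
  simp only [gradSq2_comp_swap, Function.comp_apply] at hswap
  rw [setIntegral_gamR_eq_add hL hLR (f := fun p => u p ^ 2) (hu.1.continuous.pow 2),
    setIntegral_gamR_eq_add hL hLR (continuous_gradSq2 hu.1), mul_add, mul_add]
  exact add_le_add hcu (add_le_add (harm hu) hswap)

/-! ### A regularised trial function -/

section Regularization

variable {ε δ : ℝ}

/-- A regularisation of `|x|`, smooth for `ε ≠ 0` and equal to `|x|` for `ε = 0`. -/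
def softAbs (ε x : ℝ) : ℝ := √(x ^ 2 + ε ^ 2)

lemma softAbs_zero (x : ℝ) : softAbs 0 x = |x| := by simp [softAbs, sqrt_sq_eq_abs]

lemma abs_le_softAbs (ε x : ℝ) : |x| ≤ softAbs ε x :=
  abs_le_sqrt (le_add_of_nonneg_right (sq_nonneg ε))

lemma softAbs_le_abs_add (hε : 0 ≤ ε) (x : ℝ) : softAbs ε x ≤ |x| + ε :=
  sqrt_le_iff.2 ⟨by positivity, by nlinarith [sq_abs x, abs_nonneg x]⟩

lemma softAbs_pos (hε : 0 < ε) (x : ℝ) : 0 < softAbs ε x := sqrt_pos.2 (by positivity)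

lemma div_softAbs_sq_le_one (hε : 0 < ε) (x : ℝ) : (x / softAbs ε x) ^ 2 ≤ 1 := by
  rw [sq_le_one_iff_abs_le_one, abs_div, abs_of_pos (softAbs_pos hε x),
    div_le_one (softAbs_pos hε x)]
  exact abs_le_softAbs ε x

lemma continuous_softAbs : Continuous (Function.uncurry softAbs) := by
  unfold softAbs Function.uncurry
  fun_prop

lemma contDiff_softAbs (hε : 0 < ε) : ContDiff ℝ 1 (softAbs ε) :=
  ContDiff.sqrt (by fun_prop) fun x => by positivity

lemma hasDerivAt_softAbs (hε : 0 < ε) (x : ℝ) : HasDerivAt (softAbs ε) (x / softAbs ε x) x := by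
  have hpos : 0 < x ^ 2 + ε ^ 2 := by positivity
  refine (((hasDerivAt_pow 2 x).add_const (ε ^ 2)).sqrt hpos.ne').congr_deriv ?_
  rw [softAbs, ← mul_div_mul_left x _ two_ne_zero]
  simp

/-- A regularisation from below of `min x y = (x + y - |x - y|) / 2`. -/
def softMin (ε : ℝ) (p : ℝ × ℝ) : ℝ := (p.1 + p.2 - softAbs ε (p.1 - p.2)) / 2

lemma softMin_zero (p : ℝ × ℝ) : softMin 0 p = min p.1 p.2 := by
  rw [softMin, softAbs_zero]
  linarith [max_sub_min_eq_abs' p.1 p.2, min_add_max p.1 p.2]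

lemma softMin_le_min (ε : ℝ) (p : ℝ × ℝ) : softMin ε p ≤ min p.1 p.2 := by
  rw [← softMin_zero, softMin, softMin, softAbs_zero]
  gcongr
  exact abs_le_softAbs ε _

lemma min_sub_le_softMin (hε : 0 ≤ ε) (p : ℝ × ℝ) : min p.1 p.2 - ε / 2 ≤ softMin ε p := by
  rw [← softMin_zero, softMin, softMin, softAbs_zero]
  linarith [softAbs_le_abs_add hε (p.1 - p.2)]

lemma continuous_softMin : Continuous (Function.uncurry softMin) := by
  have hsoftAbs : Continuous fun q : ℝ × (ℝ × ℝ) => softAbs q.1 (q.2.1 - q.2.2) :=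
    continuous_softAbs.comp (f := fun q : ℝ × (ℝ × ℝ) => (q.1, q.2.1 - q.2.2)) (by fun_prop)
  unfold softMin Function.uncurry
  fun_prop

lemma contDiff_softMin (hε : 0 < ε) : ContDiff ℝ 1 (softMin ε) := by
  have hsoftAbs : ContDiff ℝ 1 fun p : ℝ × ℝ => softAbs ε (p.1 - p.2) :=
    (contDiff_softAbs hε).comp (by fun_prop)
  unfold softMin
  fun_prop

lemma gradSq2_softMin (hε : 0 < ε) (p : ℝ × ℝ) :
    gradSq2 (softMin ε) p = (1 + ((p.1 - p.2) / softAbs ε (p.1 - p.2)) ^ 2) / 2 := by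
  have hfst : HasFDerivAt (fun p : ℝ × ℝ => p.1) (ContinuousLinearMap.fst ℝ ℝ ℝ) p :=
    hasFDerivAt_fst
  have hsnd : HasFDerivAt (fun p : ℝ × ℝ => p.2) (ContinuousLinearMap.snd ℝ ℝ ℝ) p :=
    hasFDerivAt_snd
  have hsoftAbs := (hasDerivAt_softAbs hε (p.1 - p.2)).comp_hasFDerivAt p (hfst.fun_sub hsnd)
  have hsoftMin := ((hfst.fun_add hsnd).fun_sub hsoftAbs).mul_const 2⁻¹
  have hmul : softMin ε = fun p => (p.1 + p.2 - (softAbs ε ∘ fun p => p.1 - p.2) p) * 2⁻¹ :=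
    funext fun p => div_eq_mul_inv _ _
  rw [gradSq2, hmul, hsoftMin.fderiv]
  simp only [smul_apply, sub_apply, add_apply, ContinuousLinearMap.coe_fst',
    ContinuousLinearMap.coe_snd', add_zero, sub_zero, smul_eq_mul, mul_one, zero_add, zero_sub,
    mul_neg, sub_neg_eq_add]
  ring

lemma gradSq2_softMin_le_one (hε : 0 < ε) (p : ℝ × ℝ) : gradSq2 (softMin ε) p ≤ 1 := by
  rw [gradSq2_softMin hε]
  linarith [div_softAbs_sq_le_one hε (p.1 - p.2)]

lemma hasDerivAt_max_zero_sq (x : ℝ) :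
    HasDerivAt (fun x : ℝ => max x 0 ^ 2) (2 * max x 0) x := by
  refine hasDerivAt_of_hasDerivAt_of_ne' (f := fun x => max x 0 ^ 2) (g := fun x => 2 * max x 0)
    (x := 0) (fun y hy => ?_) (by fun_prop) (by fun_prop) x
  rcases hy.lt_or_gt with hneg | hpos
  · refine ((hasDerivAt_const y (0 : ℝ)).congr_of_eventuallyEq ?_).congr_deriv (by simp [hneg.le])
    filter_upwards [Iio_mem_nhds hneg] with z hz
    simp [hz.out.le]
  · refine ((hasDerivAt_pow 2 y).congr_of_eventuallyEq ?_).congr_deriv (by simp [hpos.le])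
    filter_upwards [Ioi_mem_nhds hpos] with z hz
    rw [max_eq_left hz.out.le]

/-- A `C¹` approximation of the positive part of `v` that vanishes for `v ≤ δ`. -/
def softThreshold (δ v : ℝ) : ℝ := softAbs δ (max (v - δ) 0) - δ

lemma softThreshold_zero (v : ℝ) : softThreshold 0 v = max v 0 := by
  simp [softThreshold, softAbs_zero]

lemma softThreshold_of_le (hδ : 0 ≤ δ) {v : ℝ} (hv : v ≤ δ) : softThreshold δ v = 0 := by
  simp [softThreshold, softAbs, hv, hδ]

lemma continuous_softThreshold : Continuous (Function.uncurry softThreshold) := by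
  have hsoftAbs : Continuous fun q : ℝ × ℝ => softAbs q.1 (max (q.2 - q.1) 0) :=
    continuous_softAbs.comp (f := fun q : ℝ × ℝ => (q.1, max (q.2 - q.1) 0)) (by fun_prop)
  unfold softThreshold Function.uncurry
  fun_prop

lemma hasDerivAt_softThreshold (hδ : 0 < δ) (v : ℝ) :
    HasDerivAt (softThreshold δ) (max (v - δ) 0 / softAbs δ (max (v - δ) 0)) v := by
  have hpos : 0 < max (v - δ) 0 ^ 2 + δ ^ 2 := by positivity
  refine (((((hasDerivAt_max_zero_sq (v - δ)).comp_sub_const v δ).add_const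
    (δ ^ 2)).sqrt hpos.ne').sub_const δ).congr_deriv ?_
  exact mul_div_mul_left _ _ two_ne_zero

lemma contDiff_softThreshold (hδ : 0 < δ) : ContDiff ℝ 1 (softThreshold δ) := by
  refine contDiff_one_iff_deriv.2
    ⟨fun v => (hasDerivAt_softThreshold hδ v).differentiableAt, ?_⟩
  rw [funext fun v => (hasDerivAt_softThreshold hδ v).deriv]
  have hmax : Continuous fun v => max (v - δ) 0 := by fun_prop
  exact hmax.div ((contDiff_softAbs hδ).continuous.comp hmax) fun v => (softAbs_pos hδ _).ne'

/-- The function `sin (π (min x y + 1))`, whose Rayleigh quotient on every `Γ_L` is `π²`,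
regularised so as to be admissible. With parameter `δ / 2` in `softMin` the threshold at level `δ`
absorbs the error on the Dirichlet boundary. -/
def trialFun (δ : ℝ) (p : ℝ × ℝ) : ℝ := softThreshold δ (sin (π * (softMin (δ / 2) p + 1)))

lemma continuous_sq_trialFun : Continuous (Function.uncurry fun δ p => trialFun δ p ^ 2) := by
  have hsoftMin : Continuous fun q : ℝ × (ℝ × ℝ) => softMin (q.1 / 2) q.2 :=
    continuous_softMin.comp (f := fun q : ℝ × (ℝ × ℝ) => (q.1 / 2, q.2)) (by fun_prop)
  exact (continuous_softThreshold.comp (f := fun q : ℝ × (ℝ × ℝ) =>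
    (q.1, sin (π * (softMin (q.1 / 2) q.2 + 1)))) (by fun_prop)).pow 2

lemma continuous_cos_softMin_sq :
    Continuous (Function.uncurry fun δ p => cos (π * (softMin (δ / 2) p + 1)) ^ 2) := by
  have hsoftMin : Continuous fun q : ℝ × (ℝ × ℝ) => softMin (q.1 / 2) q.2 :=
    continuous_softMin.comp (f := fun q : ℝ × (ℝ × ℝ) => (q.1 / 2, q.2)) (by fun_prop)
  unfold Function.uncurry
  fun_prop

lemma contDiff_trialFun (hδ : 0 < δ) : ContDiff ℝ 1 (trialFun δ) := by
  have hsoftMin : ContDiff ℝ 1 (softMin (δ / 2)) := contDiff_softMin (half_pos hδ)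
  exact (contDiff_softThreshold hδ).comp (by fun_prop)

lemma admR_trialFun (hδ : 0 < δ) (hδ₁ : δ ≤ 1) (R : ℝ) : AdmR R (trialFun δ) := by
  refine ⟨contDiff_trialFun hδ, fun p hp => softThreshold_of_le hδ.le ?_⟩
  have hle := softMin_le_min (δ / 2) p
  have hge := min_sub_le_softMin (half_pos hδ).le p
  have hπ := pi_pos
  have hπ₄ := pi_le_four
  rcases min_of_mem_dirB hp with hmin | hmin <;> rw [hmin] at hle hge
  · refine (sin_nonpos_of_nonpos_of_neg_pi_le ?_ ?_).trans hδ.le <;> nlinarith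
  · rw [show π * (softMin (δ / 2) p + 1) = π - π * (-softMin (δ / 2) p) by ring, sin_pi_sub]
    refine (sin_le (by nlinarith)).trans ?_
    nlinarith

lemma gradSq2_trialFun_le (hδ : 0 < δ) (p : ℝ × ℝ) :
    gradSq2 (trialFun δ) p ≤ π ^ 2 * cos (π * (softMin (δ / 2) p + 1)) ^ 2 := by
  set m := softMin (δ / 2) p
  set slope := max (sin (π * (m + 1)) - δ) 0 / softAbs δ (max (sin (π * (m + 1)) - δ) 0)
  have hsin : HasDerivAt (fun x => sin (π * (x + 1))) (cos (π * (m + 1)) * (π * 1)) m :=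
    (((hasDerivAt_id m).add_const 1).const_mul π).sin
  have hprofile : HasDerivAt (fun x => softThreshold δ (sin (π * (x + 1))))
      (slope * (cos (π * (m + 1)) * (π * 1))) m :=
    (hasDerivAt_softThreshold hδ _).comp m hsin
  calc gradSq2 (trialFun δ) p
      = (slope * (cos (π * (m + 1)) * (π * 1))) ^ 2 * gradSq2 (softMin (δ / 2)) p :=
        gradSq2_comp (g := fun x => softThreshold δ (sin (π * (x + 1)))) hprofile
          ((contDiff_softMin (half_pos hδ)).differentiable one_ne_zero p)
    _ ≤ (1 * (cos (π * (m + 1)) * (π * 1)) ^ 2) * 1 := by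
        rw [mul_pow]
        gcongr
        · exact gradSq2_nonneg _ p
        · exact div_softAbs_sq_le_one hδ _
        · exact gradSq2_softMin_le_one (half_pos hδ) p
    _ = π ^ 2 * cos (π * (m + 1)) ^ 2 := by ring

end Regularization

/-! ### Monotonicity of `λ₁(Γ_R)` -/

lemma integral_sub_mul_cos_two_pi (L : ℝ) :
    ∫ m in (-1)..0, (L - m) * cos (2 * (π * (m + 1))) = 0 := by
  have hderiv : ∀ m ∈ uIcc (-1) 0, HasDerivAt
      (fun m => (L - m) * (sin (2 * (π * (m + 1))) / (2 * π))
        - cos (2 * (π * (m + 1))) / (2 * π) ^ 2)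
      ((L - m) * cos (2 * (π * (m + 1)))) m := fun m _ => by
    have hangle : HasDerivAt (fun m => 2 * (π * (m + 1))) (2 * (π * 1)) m :=
      (((hasDerivAt_id m).add_const 1).const_mul π).const_mul 2
    refine ((((hasDerivAt_id m).const_sub L).mul (hangle.sin.div_const (2 * π))).sub
      (hangle.cos.div_const ((2 * π) ^ 2))).congr_deriv ?_
    simp only [id]
    field_simp
    ring
  rw [intervalIntegral.integral_eq_sub_of_hasDerivAt hderiv
    (Continuous.intervalIntegrable (by fun_prop) _ _)]
  simp

lemma setIntegral_gamR_cos_sq_eq_sin_sq {L : ℝ} (hL : 0 ≤ L) :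
    ∫ p in GamR L, cos (π * (min p.1 p.2 + 1)) ^ 2 =
      ∫ p in GamR L, sin (π * (min p.1 p.2 + 1)) ^ 2 := by
  rw [setIntegral_gamR_comp_min hL (f := fun m => cos (π * (m + 1)) ^ 2) (by fun_prop),
    setIntegral_gamR_comp_min hL (f := fun m => sin (π * (m + 1)) ^ 2) (by fun_prop), ← sub_eq_zero,
    ← mul_sub, ← intervalIntegral.integral_sub (Continuous.intervalIntegrable (by fun_prop) _ _)
      (Continuous.intervalIntegrable (by fun_prop) _ _)]
  simp only [← mul_sub, ← cos_two_mul', integral_sub_mul_cos_two_pi, mul_zero]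

lemma sin_pi_mul_min_add_one_pos {p : ℝ × ℝ} (hp : p ∈ Gam) : 0 < sin (π * (min p.1 p.2 + 1)) :=
  sin_pos_of_pos_of_lt_pi (mul_pos pi_pos (by linarith [hp.1]))
    (mul_lt_of_lt_one_right pi_pos (by linarith [hp.2]))

lemma lamR_mul_setIntegral_sin_sq_le (L : ℝ) :
    lamR L * ∫ p in GamR L, sin (π * (min p.1 p.2 + 1)) ^ 2 ≤
      π ^ 2 * ∫ p in GamR L, cos (π * (min p.1 p.2 + 1)) ^ 2 := by
  have hmass := (continuous_setIntegral_of_isBounded (ν := volume) (isBounded_gamR L)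
    continuous_sq_trialFun).const_mul (lamR L)
  have henergy := (continuous_setIntegral_of_isBounded (ν := volume) (isBounded_gamR L)
    continuous_cos_softMin_sq).const_mul (π ^ 2)
  have hlimit := le_of_tendsto_of_tendsto (hmass.continuousWithinAt (s := Ioi 0) (x := 0))
    henergy.continuousWithinAt <| by
      filter_upwards [Ioc_mem_nhdsGT one_pos] with δ hδ
      rw [← integral_const_mul (π ^ 2)]
      refine (lamR_mul_setIntegral_sq_le (admR_trialFun hδ.1 hδ.2 L)).trans (integral_mono
        (integrableOn_of_continuous_of_isBounded (isBounded_gamR L)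
          (continuous_gradSq2 (contDiff_trialFun hδ.1)))
        (integrableOn_of_continuous_of_isBounded (isBounded_gamR L) ?_)
        fun p => gradSq2_trialFun_le hδ.1 p)
      exact (continuous_cos_softMin_sq.comp (Continuous.prodMk_right δ)).const_mul _
  have htrial : ∫ p in GamR L, trialFun 0 p ^ 2 =
      ∫ p in GamR L, sin (π * (min p.1 p.2 + 1)) ^ 2 :=
    setIntegral_congr_fun (isOpen_gamR L).measurableSet fun p hp => by
      simp only [trialFun, softThreshold_zero, zero_div, softMin_zero,
        max_eq_left (sin_pi_mul_min_add_one_pos hp.1).le]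
  simpa only [htrial, zero_div, softMin_zero] using hlimit

lemma lamR_le_pi_sq {L : ℝ} (hL : 0 ≤ L) : lamR L ≤ π ^ 2 := by
  have hcont : Continuous fun p : ℝ × ℝ => sin (π * (min p.1 p.2 + 1)) ^ 2 := by fun_prop
  obtain ⟨p, hp⟩ := gamR_nonempty (neg_one_lt_zero.trans_le hL)
  have hmass : 0 < ∫ p in GamR L, sin (π * (min p.1 p.2 + 1)) ^ 2 :=
    setIntegral_pos_of_isOpen (isOpen_gamR L) hcont
      (integrableOn_of_continuous_of_isBounded (isBounded_gamR L) hcont) (fun _ => sq_nonneg _) hp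
      (pow_pos (sin_pi_mul_min_add_one_pos hp.1) 2).ne'
  refine le_of_mul_le_mul_right ?_ hmass
  exact (lamR_mul_setIntegral_sin_sq_le L).trans_eq (by rw [setIntegral_gamR_cos_sq_eq_sin_sq hL])

lemma lamR_mono {L R : ℝ} (hL : 0 ≤ L) (hLR : L ≤ R) : lamR L ≤ lamR R :=
  le_lamR (neg_one_lt_zero.trans_le (hL.trans hLR)) fun _ hu =>
    mul_setIntegral_gamR_sq_le hL hLR (lamR_le_pi_sq hL) hu
      (lamR_mul_setIntegral_sq_le (hu.anti hLR))

/-! ### The ground energy of the Sturm–Liouville operator -/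

lemma exists_tsupport_subset_gamR {u : ℝ × ℝ → ℝ} (hcompact : HasCompactSupport u)
    (hsupp : tsupport u ⊆ Gam) : ∃ T, ∀ R ≥ T, tsupport u ⊆ GamR R := by
  obtain ⟨M, hM⟩ := hcompact.isCompact.isBounded.exists_norm_le
  refine ⟨M + 1, fun R hR p hp => mem_gamR_iff.2 ?_⟩
  have hfst := (norm_fst_le p).trans (hM p hp)
  have hsnd := (norm_snd_le p).trans (hM p hp)
  rw [norm_eq_abs, abs_le] at hfst hsnd
  obtain ⟨hgt, hlt⟩ := hsupp hp
  rw [lt_min_iff] at hgt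
  exact ⟨hgt.1, by linarith, hgt.2, by linarith, min_lt_iff.1 hlt⟩

lemma exists_forall_lamR_le_div {u : ℝ × ℝ → ℝ} (hu : ContDiff ℝ 1 u)
    (hcompact : HasCompactSupport u) (hsupp : tsupport u ⊆ Gam) (hmass : 0 < ∫ p in Gam, u p ^ 2) :
    ∃ T, ∀ R ≥ T, lamR R ≤ (∫ p in Gam, gradSq2 u p) / ∫ p in Gam, u p ^ 2 := by
  obtain ⟨T, hT⟩ := exists_tsupport_subset_gamR hcompact hsupp
  refine ⟨T, fun R hR => (le_div_iff₀ hmass).2 ?_⟩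
  have hrestrict : ∀ {f : ℝ × ℝ → ℝ}, (∀ p ∉ tsupport u, f p = 0) →
      ∫ p in Gam, f p = ∫ p in GamR R, f p := fun hf =>
    setIntegral_eq_of_subset_of_forall_sdiff_eq_zero isOpen_gam.measurableSet inter_subset_left
      fun p hp => hf p fun h => hp.2 (hT R hR h)
  rw [hrestrict (f := fun p => u p ^ 2) fun p hp => by simp [image_eq_zero_of_notMem_tsupport hp],
    hrestrict (f := gradSq2 u) fun p hp => by simp [gradSq2, fderiv_of_notMem_tsupport ℝ hp]]
  exact lamR_mul_setIntegral_sq_le (admR_of_tsupport_subset_gam hu hsupp)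

lemma muSL_mul_setIntegral_sq_le {L : ℝ} {q : ℝ → ℝ} (hq : ContDiff ℝ 1 q)
    (hint : IntegrableOn (fun t => q t ^ 2) (Ioi L))
    (hint' : IntegrableOn (fun t => deriv q t ^ 2) (Ioi L)) :
    muSL L * ∫ t in Ioi L, q t ^ 2 ≤ ∫ t in Ioi L, (deriv q t ^ 2 + lamR t * q t ^ 2) := by
  have hnonneg : ∀ v : ℝ → ℝ, 0 ≤ ∫ t in Ioi L, (deriv v t ^ 2 + lamR t * v t ^ 2) := fun v =>
    integral_nonneg fun t => add_nonneg (sq_nonneg _) (mul_nonneg (lamR_nonneg t) (sq_nonneg _))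
  have hmass : ∀ v : ℝ → ℝ, 0 ≤ ∫ t in Ioi L, v t ^ 2 := fun v =>
    integral_nonneg fun _ => sq_nonneg _
  rcases (hmass q).eq_or_lt with hzero | hpos
  · rw [← hzero, mul_zero]
    exact hnonneg q
  · rw [← le_div_iff₀ hpos]
    refine csInf_le ⟨0, ?_⟩ ⟨q, hq, hint, hint', hpos.ne', rfl⟩
    rintro _ ⟨v, -, -, -, -, rfl⟩
    exact div_nonneg (hnonneg v) (hmass v)

lemma muSL_le_of_forall_lamR_le {T r : ℝ} (h : ∀ t ≥ T, lamR t ≤ r) (L : ℝ) : muSL L ≤ r := by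
  refine le_of_forall_pos_le_add fun ε hε => ?_
  obtain ⟨q, hq, hcompact, hsupp, hpos, hquot⟩ := exists_contDiff_integral_deriv_sq_le (max L T) hε
  have hrestrict : ∀ {f : ℝ → ℝ}, (∀ t ∉ tsupport q, f t = 0) → ∫ t in Ioi L, f t = ∫ t, f t :=
    fun hf => setIntegral_eq_integral_of_forall_compl_eq_zero fun t ht =>
      hf t fun h => ht (Ioi_subset_Ioi (le_max_left L T) (hsupp h))
  have hmass : ∫ t in Ioi L, q t ^ 2 = ∫ t, q t ^ 2 :=
    hrestrict fun t ht => by simp [image_eq_zero_of_notMem_tsupport ht]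
  have hkinetic : ∫ t in Ioi L, deriv q t ^ 2 = ∫ t, deriv q t ^ 2 :=
    hrestrict fun t ht => by simp [← fderiv_apply_one_eq_deriv, fderiv_of_notMem_tsupport ℝ ht]
  have hint : IntegrableOn (fun t => q t ^ 2) (Ioi L) :=
    (integrable_sq_of_hasCompactSupport hq.continuous hcompact).integrableOn
  have hint' : IntegrableOn (fun t => deriv q t ^ 2) (Ioi L) :=
    (integrable_sq_of_hasCompactSupport (hq.continuous_deriv le_rfl) hcompact.deriv).integrableOn
  have hle : ∀ t ∈ tsupport q, lamR t ≤ r := fun t ht =>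
    h t (max_lt_iff.1 (hsupp ht).out).2.le
  have henergy := (muSL_mul_setIntegral_sq_le hq hint hint').trans
    (setIntegral_deriv_sq_add_mul_sq_le lamR_nonneg hle hint hint')
  rw [hkinetic, hmass] at henergy
  exact le_of_mul_le_mul_right (by linarith) hpos

lemma muSL_le_lamG (L : ℝ) : muSL L ≤ lamG :=
  le_lamG fun _ hu hcompact hsupp hmass =>
    let ⟨_, hT⟩ := exists_forall_lamR_le_div hu hcompact hsupp hmass
    muSL_le_of_forall_lamR_le hT L

/-- Lemma 3.7 ii & iii: (a) for every `L ≥ 0`, any `L²`-eigenvalue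
`μ` of the Sturm–Liouville operator `q ↦ -q'' + λ q` on `(L,∞)` with Neumann condition
`q'(L) = 0` and potential `λ(t) = λ₁(Γ_t)` satisfies `μ > λ(L)`; (b) for every
`L > −1`, the ground energy satisfies `μ(L) ≤ λ₁(Γ)`. -/
theorem sturm_liouville_bounds :
    (∀ L : ℝ, 0 ≤ L → ∀ (μ : ℝ) (q : ℝ → ℝ), ContDiff ℝ 2 q →
      (∀ t ∈ Set.Ioi L, -(deriv (deriv q) t) + lamR t * q t = μ * q t) →
      deriv q L = 0 →
      IntegrableOn (fun t => (q t) ^ 2) (Set.Ioi L) →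
      IntegrableOn (fun t => (deriv q t) ^ 2) (Set.Ioi L) →
      (∃ t ∈ Set.Ici L, q t ≠ 0) →
      lamR L < μ) ∧
    (∀ L : ℝ, -1 < L → muSL L ≤ lamG) := by
  refine ⟨fun L hL μ q hq heq hneumann hint _ hne => ?_, fun L _ => muSL_le_lamG L⟩
  have hpotential : ∀ t ∈ Ioi L, lamR L ≤ lamR t := fun t ht => lamR_mono hL ht.out.le
  exact lt_eigenvalue_of_forall_le_potential hpotential hq heq hneumann hint hne
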